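/- Let k be a field with char k ≠ 2 and A a nonzero n×n Hermitian matrix over H. Then A has Jordan rank one if and only if there exist z = (z₁,…,z_n) ∈ Hⁿ and a nonzero scalar c ∈ k such that c•A = ν₂(z), i.e. c·a_{t,u} = z_t·adjugate(z_u) for all t, u. -/

import Mathlib

/-!
Write `ν(z) = (z t * adj (z u))` and `q_B(w) = ∑ adj (w t) * B t u * w u`. Conjugation on `M₂(k)` is
an additive anti-automorphism, and `a + adj a = tr a • 1`, so for Hermitian `B` the off-diagonal
terms of `q_B(w)` pair up to traces; the diagonal of `B` is scalar because `2 ≠ 0`. Hence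
`q_B(w) = ⟨B, ν(w)⟩ • 1` (`sum_adj_mul_mul`). Moreover `A * ν(w) * A = ν(A w)` for Hermitian `A` (`mul_nu_mul`).

If `A` has Jordan rank one, then `ν(A w) = A * ν(w) * A = ⟨A, ν(w)⟩ • A`. The quadratic form
`w ↦ ⟨A, ν(w)⟩` determines `A` by polarization (`exists_jip_nu_ne_zero`), so some `w` gives a
nonzero scalar. Conversely `ν(z) * B * ν(z) = z (z* B z) z* = ⟨B, ν(z)⟩ • ν(z)`
(`nu_mul_mul_nu`); substituting `ν(z) = c • A` and cancelling `c ^ 2` gives the Jordan identity.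
-/

open Matrix

/-- 2×2 matrices over `k`: the split quaternions, with conjugation `adjugate`
and norm `det`. -/
abbrev M2 (k : Type*) [Field k] := Matrix (Fin 2) (Fin 2) k

variable {k : Type*} [Field k] {n : ℕ}

/-- A matrix with entries in `H = M₂(k)` is Hermitian if `a_{u,t} = adjugate (a_{t,u})`. -/
def IsHerm (A : Matrix (Fin n) (Fin n) (M2 k)) : Prop :=
  ∀ t u, A u t = (A t u).adjugate

/-- The scalar pairing `⟨A,B⟩` on Hermitian matrices:
`Σ_{t<u} (Q(a_{t,u}+b_{t,u}) − Q(a_{t,u}) − Q(b_{t,u})) + Σ_t r_t s_t`, where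
`r_t, s_t` are the scalars on the diagonals. -/
def jip (A B : Matrix (Fin n) (Fin n) (M2 k)) : k :=
  (∑ p ∈ Finset.univ.filter (fun p : Fin n × Fin n => p.1 < p.2),
      ((A p.1 p.2 + B p.1 p.2).det - (A p.1 p.2).det - (B p.1 p.2).det))
    + ∑ t, (A t t 0 0) * (B t t 0 0)

/-- A nonzero Hermitian matrix `A` has Jordan rank one if `A·B·A = ⟨A,B⟩•A`
for every Hermitian `B`. -/
def JordanRankOne (A : Matrix (Fin n) (Fin n) (M2 k)) : Prop :=
  A ≠ 0 ∧ ∀ B : Matrix (Fin n) (Fin n) (M2 k), IsHerm B → A * B * A = jip A B • A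

/-- `L_A : Hⁿ → Hⁿ`, `(x_u) ↦ (Σ_u a_{t,u}·x_u)_t`, as a `k`-linear map. -/
def LA (A : Matrix (Fin n) (Fin n) (M2 k)) : (Fin n → M2 k) →ₗ[k] (Fin n → M2 k) where
  toFun x := fun t => ∑ u, A t u * x u
  map_add' a b := by
    funext t
    simp [mul_add, Finset.sum_add_distrib]
  map_smul' c a := by
    funext t
    simp [Matrix.mul_smul, Finset.smul_sum]

/-- The rank one Hermitian matrix `ν₂(z) = z z*`. -/
def nu (z : Fin n → M2 k) : Matrix (Fin n) (Fin n) (M2 k) :=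
  Matrix.of (fun t u => z t * (z u).adjugate)

lemma adj_add (a b : M2 k) : (a + b).adjugate = a.adjugate + b.adjugate := by
  simp only [adjugate_fin_two]
  ext i j
  fin_cases i <;> fin_cases j <;> simp [add_comm]

lemma adj_sum {ι : Type*} (s : Finset ι) (f : ι → M2 k) :
    (∑ i ∈ s, f i).adjugate = ∑ i ∈ s, (f i).adjugate :=
  map_sum (AddMonoidHom.mk' (fun a : M2 k => a.adjugate) adj_add) f s

lemma adj_adj (a : M2 k) : a.adjugate.adjugate = a := by
  simp [adjugate_fin_two, ← Matrix.eta_fin_two]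

lemma add_adj (a : M2 k) : a + a.adjugate = a.trace • (1 : M2 k) := by
  rw [adjugate_fin_two]
  ext i j
  fin_cases i <;> fin_cases j <;> simp [trace_fin_two, add_comm]

lemma det_polar (a b : M2 k) : (a + b).det - a.det - b.det = (a * b.adjugate).trace := by
  simp [adjugate_fin_two, det_fin_two, trace_fin_two, Matrix.mul_apply, Fin.sum_univ_two]
  ring

lemma eq_smul_one_of_adj_eq (hchar : (2 : k) ≠ 0) (a : M2 k) (h : a = a.adjugate) :
    a = a 0 0 • (1 : M2 k) := by
  have h2 : (2 : k) • a = a.trace • (1 : M2 k) := by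
    rw [← add_adj, ← h, two_smul]
  have key : ∀ i j, 2 * a i j = a.trace * (1 : M2 k) i j := fun i j => by
    simpa using congrFun (congrFun h2 i) j
  ext i j
  apply mul_left_cancel₀ hchar
  have h00 := key 0 0
  rw [key i j]
  simp only [one_apply_eq, mul_one] at h00
  rw [← h00, Matrix.smul_apply, smul_eq_mul, mul_assoc]

/-- A double sum, grouped into pairs of transposed off-diagonal terms and the diagonal. -/
lemma sum_sum_eq_lt {M : Type*} [AddCommMonoid M] (f : Fin n → Fin n → M) :
    ∑ t, ∑ u, f t u = (∑ p ∈ Finset.univ.filter (fun p : Fin n × Fin n => p.1 < p.2),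
      (f p.1 p.2 + f p.2 p.1)) + ∑ t, f t t := by
  rw [Finset.sum_add_distrib, Finset.sum_filter, Finset.sum_filter, Fintype.sum_prod_type,
    Fintype.sum_prod_type]
  nth_rewrite 3 [Finset.sum_comm]
  rw [← Finset.sum_add_distrib, ← Finset.sum_add_distrib]
  refine Finset.sum_congr rfl fun t _ => ?_
  have hd : f t t = ∑ u, if t = u then f t u else 0 := by simp
  rw [hd, ← Finset.sum_add_distrib, ← Finset.sum_add_distrib]
  refine Finset.sum_congr rfl fun u _ => ?_
  rcases lt_trichotomy t u with h | h | h
  · simp [h, h.ne, h.not_gt]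
  · simp [h]
  · simp [h, h.ne', h.not_gt]

/-- The Hermitian form `w* B w` is the scalar `⟨B, ν(w)⟩`. -/
lemma sum_adj_mul_mul (hchar : (2 : k) ≠ 0) (B : Matrix (Fin n) (Fin n) (M2 k)) (hB : IsHerm B)
    (w : Fin n → M2 k) :
    ∑ t, ∑ u, (w t).adjugate * B t u * w u = jip B (nu w) • (1 : M2 k) := by
  rw [sum_sum_eq_lt, jip, add_smul, Finset.sum_smul, Finset.sum_smul]
  congr 1
  · refine Finset.sum_congr rfl fun p _ => ?_
    have h : (w p.2).adjugate * B p.2 p.1 * w p.1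
        = ((w p.1).adjugate * B p.1 p.2 * w p.2).adjugate := by
      simp only [adjugate_mul_distrib, adj_adj, hB p.1 p.2, mul_assoc]
    rw [h, add_adj, det_polar]
    congr 1
    simp only [nu, of_apply, adjugate_mul_distrib, adj_adj]
    rw [mul_assoc, trace_mul_comm, mul_assoc]
  · refine Finset.sum_congr rfl fun t _ => ?_
    have h := eq_smul_one_of_adj_eq hchar (B t t) (hB t t)
    conv_lhs => rw [h]
    simp [nu, adjugate_mul, mul_adjugate, smul_smul]

lemma isHerm_nu (w : Fin n → M2 k) : IsHerm (nu w) := fun t u => by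
  simp [nu, adjugate_mul_distrib, adj_adj]

lemma mul_nu_mul (A : Matrix (Fin n) (Fin n) (M2 k)) (hA : IsHerm A) (w : Fin n → M2 k) :
    A * nu w * A = nu (fun t => ∑ u, A t u * w u) := by
  ext1 t u
  simp only [Matrix.mul_apply, nu, of_apply, adj_sum, adjugate_mul_distrib, ← hA u]
  rw [Finset.sum_mul_sum, Finset.sum_comm]
  simp only [Finset.sum_mul, mul_assoc]

lemma nu_mul_mul_nu (hchar : (2 : k) ≠ 0) (B : Matrix (Fin n) (Fin n) (M2 k)) (hB : IsHerm B)
    (z : Fin n → M2 k) : nu z * B * nu z = jip B (nu z) • nu z := by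
  ext1 t u
  have h : (nu z * B * nu z) t u
      = z t * (∑ x, ∑ y, (z x).adjugate * B x y * z y) * (z u).adjugate := by
    simp only [Matrix.mul_apply, nu, of_apply, Finset.sum_mul, Finset.mul_sum, mul_assoc]
    rw [Finset.sum_comm]
  rw [h, sum_adj_mul_mul hchar B hB]
  simp [nu]

/-- The quadratic form `w ↦ ⟨A, ν(w)⟩` of a nonzero Hermitian matrix does not vanish identically:
it detects diagonal entries on coordinate vectors, and then the off-diagonal ones by
nondegeneracy of the trace form. -/
lemma exists_jip_nu_ne_zero (hchar : (2 : k) ≠ 0) (A : Matrix (Fin n) (Fin n) (M2 k))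
    (hA : IsHerm A) (hA0 : A ≠ 0) : ∃ w : Fin n → M2 k, jip A (nu w) ≠ 0 := by
  by_contra! hw
  have hq : ∀ w : Fin n → M2 k, ∑ t, ∑ u, (w t).adjugate * A t u * w u = 0 := fun w => by
    rw [sum_adj_mul_mul hchar A hA, hw, zero_smul]
  have hsingle : ∀ (p t : Fin n) (N : M2 k),
      (Pi.single (M := fun _ => M2 k) p N t).adjugate
        = Pi.single (M := fun _ => M2 k) p N.adjugate t := fun p t N => by
    by_cases h : t = p
    · subst h; simp
    · simp [h]
  have hdiag : ∀ p, A p p = 0 := fun p => by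
    have h := hq (Pi.single p 1)
    simp only [hsingle] at h
    simpa [Pi.single_apply, ite_mul, mul_ite] using h
  apply hA0
  ext1 p q
  have htr : ∀ N : M2 k, (A p q * N).trace = 0 := fun N => by
    have h := hq (Pi.single p 1 + Pi.single q N)
    simp only [Pi.add_apply, adj_add, hsingle, add_mul, mul_add, Finset.sum_add_distrib] at h
    simp only [Pi.single_apply, ite_mul, mul_ite, zero_mul, mul_zero, Finset.sum_ite_eq',
      Finset.mem_univ, if_true, adjugate_one, one_mul, mul_one, hdiag,
      zero_add, add_zero] at h
    rw [hA p q, ← adjugate_mul_distrib, add_comm, add_adj] at h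
    simpa using congrFun (congrFun h 0) 0
  exact Matrix.ext_iff_trace_mul_right.mpr fun N => by simpa using htr N

lemma jip_comm (A B : Matrix (Fin n) (Fin n) (M2 k)) : jip A B = jip B A := by
  simp only [jip, mul_comm, add_comm (A _ _), sub_right_comm]

lemma jip_smul_right (c : k) (A B : Matrix (Fin n) (Fin n) (M2 k)) :
    jip A (c • B) = c * jip A B := by
  simp only [jip, det_polar, Matrix.smul_apply, adjugate_smul, mul_add, Finset.mul_sum]
  simp [mul_left_comm]

theorem stmt13 (k : Type*) [Field k] (hchar : (2 : k) ≠ 0) (n : ℕ)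
    (A : Matrix (Fin n) (Fin n) (M2 k)) (hA : IsHerm A) (hA0 : A ≠ 0) :
    JordanRankOne A ↔
      ∃ (z : Fin n → M2 k) (c : k), c ≠ 0 ∧
        c • A = Matrix.of (fun t u => z t * (z u).adjugate) := by
  constructor
  · rintro ⟨-, h⟩
    obtain ⟨w, hw⟩ := exists_jip_nu_ne_zero hchar A hA hA0
    refine ⟨fun t => ∑ u, A t u * w u, jip A (nu w), hw, ?_⟩
    rw [← h _ (isHerm_nu w), mul_nu_mul A hA]
    rfl
  · rintro ⟨z, c, hc, h⟩
    replace h : c • A = nu z := h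
    refine ⟨hA0, fun B hB => ?_⟩
    have key := nu_mul_mul_nu hchar B hB z
    rw [← h, jip_smul_right, jip_comm B A] at key
    rw [Matrix.smul_mul, Matrix.smul_mul, Matrix.mul_smul, smul_smul c c, smul_smul,
      mul_right_comm, ← smul_smul (c * c)] at key
    exact smul_right_injective _ (mul_ne_zero hc hc) key
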